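/- Let f : X → X be a continuous map on a compact metric space X and let Λ ⊆ X be a compact invariant set with the periodic gluing orbit property. Then every f-invariant Borel probability measure supported on Λ is a weak* limit of periodic measures of f, i.e., P_f(Λ) ⊆ closure(P_p(f)). -/

import Mathlib

open MeasureTheory Filter Topology Set
open scoped ENNReal NNReal

variable {X : Type*} [MetricSpace X] [CompactSpace X] [MeasurableSpace X] [BorelSpace X]

/-- The empirical (time-average) measure `Υ_{n+1}(x) = (1/(n+1)) ∑_{j=0}^{n} δ_{f^j x}`. -/
noncomputable def empMeas (f : X → X) (x : X) (n : ℕ) : Measure X :=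
  ((n + 1 : ℝ≥0∞))⁻¹ • ∑ j ∈ Finset.range (n + 1), Measure.dirac (f^[j] x)

instance empMeas_prob (f : X → X) (x : X) (n : ℕ) : IsProbabilityMeasure (empMeas f x n) := by
  constructor
  simp only [empMeas, Measure.smul_apply, Measure.coe_finset_sum, Finset.sum_apply,
    MeasureTheory.measure_univ, Finset.sum_const, Finset.card_range, nsmul_eq_mul, mul_one,
    smul_eq_mul]
  rw [show ((n : ℝ≥0∞) + 1) = ((n + 1 : ℕ) : ℝ≥0∞) by push_cast; ring,
    ENNReal.inv_mul_cancel] <;> simp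

/-- The empirical measure as a probability measure. -/
noncomputable def empP (f : X → X) (x : X) (n : ℕ) : ProbabilityMeasure X :=
  ⟨empMeas f x n, empMeas_prob f x n⟩

/-- The p-omega-limit set: all weak* limits of subsequences of the empirical measures. -/
def pOmega (f : X → X) (x : X) : Set (ProbabilityMeasure X) :=
  {μ | ∃ φ : ℕ → ℕ, StrictMono φ ∧ Tendsto (fun i => empP f x (φ i)) atTop (𝓝 μ)}

/-- The omega-limit set of a point. -/
def omegaSet (f : X → X) (x : X) : Set X :=
  ⋂ N : ℕ, closure {y | ∃ n ≥ N, f^[n] x = y}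

/-- An invariant probability measure. -/
def InvMeas (f : X → X) (μ : ProbabilityMeasure X) : Prop :=
  ∀ A : Set X, MeasurableSet A → μ.toMeasure (f ⁻¹' A) = μ.toMeasure A

/-- `μ` is physical-like (SRB-like / observable) w.r.t. the reference measure `Leb`:
every weak* neighborhood basin has positive reference measure. -/
def PhysicalLike (f : X → X) (Leb : Measure X) (μ : ProbabilityMeasure X) : Prop :=
  ∀ U ∈ 𝓝 μ, 0 < Leb {x | ∃ ν ∈ pOmega f x, ν ∈ U}

/-- An ε-chain from `a` to `b` with all points inside `A`. -/
def IsEpsChain (f : X → X) (ε : ℝ) (A : Set X) (a b : X) : Prop :=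
  ∃ n : ℕ, 0 < n ∧ ∃ c : ℕ → X, c 0 = a ∧ c n = b ∧ (∀ i ≤ n, c i ∈ A) ∧
    ∀ i < n, dist (f (c i)) (c (i + 1)) < ε

/-- A nonempty compact invariant internally chain transitive set. -/
def InternallyChainTransitive (f : X → X) (A : Set X) : Prop :=
  A.Nonempty ∧ IsCompact A ∧ f '' A ⊆ A ∧ ∀ a ∈ A, ∀ b ∈ A, ∀ ε > 0, IsEpsChain f ε A a b

/-- Periodic shadowing property. -/
def PeriodicShadowing (f : X → X) : Prop :=
  ∀ ε > 0, ∃ δ > 0, ∀ (x : ℕ → X) (T : ℕ), 0 < T →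
    (∀ i, dist (f (x i)) (x (i + 1)) < δ) → (∀ i, x (i + T) = x i) →
    ∃ y : X, (∃ p : ℕ, 0 < p ∧ f^[p] y = y) ∧ ∀ n, dist (f^[n] y) (x n) < ε

/-- The periodic gluing orbit property of `Λ`. -/
def PeriodicGluing (f : X → X) (Λ : Set X) : Prop :=
  ∀ ε > 0, ∃ M : ℕ, ∀ k : ℕ, 0 < k → ∀ (xs : ℕ → X) (ns : ℕ → ℕ),
    (∀ i < k, xs i ∈ Λ) → (∀ i < k, 1 ≤ ns i) →
    ∃ ms : ℕ → ℕ, (∀ i < k, ms i ≤ M) ∧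
      ∃ z : X, f^[∑ j ∈ Finset.range k, (ns j + ms j)] z = z ∧
        ∀ i < k, ∀ l < ns i,
          dist (f^[(∑ j ∈ Finset.range i, (ns j + ms j)) + l] z) (f^[l] (xs i)) < ε

/-- The set of periodic measures (uniform measures on periodic orbits). -/
def periodicMeasures (f : X → X) : Set (ProbabilityMeasure X) :=
  {μ | ∃ z : X, ∃ m : ℕ, f^[m + 1] z = z ∧ μ = empP f z m}

/-- The topological support of a measure. -/
def mSupport (μ : Measure X) : Set X := {y | ∀ U ∈ 𝓝 y, 0 < μ U}

/-!
Gluing long orbit segments of points `x₁, …, x_k` of `Λ` gives a periodic point along whose orbit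
the average of a bounded uniformly continuous `φ` is close to the mean of the Birkhoff averages of
`φ` over these segments, because the gaps are bounded independently of the length of the segments.
Rather than decomposing `μ` into ergodic measures, sample the `x_j` independently from `μ`: the
strong law of large numbers makes the mean of their Birkhoff averages converge to the `μ`-integral
of the Birkhoff average, which is `∫ φ ∂μ` by invariance. All this can be done for finitely many `φ`
at once, and on a compact space the resulting periodic measures form a net converging to `μ`.
-/

open Function ProbabilityTheory
open scoped BoundedContinuousFunction

theorem exists_seq_forall_mem_forall_tendsto_average {Ω ι E : Type*} [MeasurableSpace Ω]
    [Countable ι] [NormedAddCommGroup E] [NormedSpace ℝ E] [CompleteSpace E]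
    {μ : Measure Ω} [IsProbabilityMeasure μ] {Λ : Set Ω} (hΛ : ∀ᵐ x ∂μ, x ∈ Λ)
    {φ : ι → Ω → E} (hφ : ∀ i, Integrable (φ i) μ) :
    ∃ xs : ℕ → Ω, (∀ n, xs n ∈ Λ) ∧ ∀ i,
      Tendsto (fun n : ℕ => (n : ℝ)⁻¹ • ∑ j ∈ Finset.range n, φ i (xs j)) atTop
        (𝓝 (∫ x, φ i x ∂μ)) := by
  borelize E
  obtain ⟨Ω', _, P, ξ, hξ_meas, hξ_law, hξ_indep, _⟩ := exists_iid ℕ μ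
  have hmem : ∀ᵐ ω ∂P, ∀ n, ξ n ω ∈ Λ := ae_all_iff.2 fun n =>
    ((hξ_law n).measurePreserving (hξ_meas n)).quasiMeasurePreserving.ae hΛ
  have hφ_map : ∀ i n, AEMeasurable (φ i) (P.map (ξ n)) := fun i n =>
    (hξ_law n).map_eq ▸ (hφ i).aemeasurable
  have hlim : ∀ᵐ ω ∂P, ∀ i, Tendsto
      (fun n : ℕ => (n : ℝ)⁻¹ • ∑ j ∈ Finset.range n, φ i (ξ j ω)) atTop
      (𝓝 (∫ x, φ i x ∂μ)) := by
    refine ae_all_iff.2 fun i => ?_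
    rw [← (hξ_law 0).integral_comp (hφ i).aestronglyMeasurable]
    refine strong_law_ae (fun n => φ i ∘ ξ n) ?_ ?_ ?_
    · exact ((hξ_law 0).measurePreserving (hξ_meas 0)).integrable_comp_of_integrable (hφ i)
    · exact fun m n hmn => (hξ_indep.indepFun hmn).comp₀ (hξ_meas m).aemeasurable
        (hξ_meas n).aemeasurable (hφ_map i m) (hφ_map i n)
    · exact fun n => IdentDistrib.comp_of_aemeasurable ⟨(hξ_meas n).aemeasurable,
        (hξ_meas 0).aemeasurable, (hξ_law n).map_eq.trans (hξ_law 0).map_eq.symm⟩ (hφ_map i n)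
  obtain ⟨ω, hω_mem, hω_lim⟩ := (hmem.and hlim).exists
  exact ⟨fun n => ξ n ω, hω_mem, hω_lim⟩

section Birkhoff

variable {α E : Type*} {f : α → α} {φ : α → E}

theorem norm_birkhoffSum_le [SeminormedAddCommGroup E] {C : ℝ} (hC : ∀ x, ‖φ x‖ ≤ C) (n : ℕ)
    (x : α) : ‖birkhoffSum f φ n x‖ ≤ n * C := by
  simpa [birkhoffSum] using norm_sum_le_of_le (Finset.range n) fun l _ => hC (f^[l] x)

theorem dist_birkhoffSum_birkhoffSum_le_mul [SeminormedAddCommGroup E] {ε : ℝ} {n : ℕ} {x y : α}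
    (h : ∀ l < n, dist (φ (f^[l] x)) (φ (f^[l] y)) ≤ ε) :
    dist (birkhoffSum f φ n x) (birkhoffSum f φ n y) ≤ n * ε := by
  refine (dist_sum_sum_le _ _ _).trans ?_
  simpa using Finset.sum_le_card_nsmul _ _ ε fun l hl => h l (Finset.mem_range.1 hl)

theorem dist_birkhoffSum_sum_birkhoffSum_le [SeminormedAddCommGroup E] {B ε : ℝ} {k : ℕ}
    {xs : ℕ → α} {ns ms : ℕ → ℕ} {z : α} (hB : ∀ x, ‖φ x‖ ≤ B)
    (hz : ∀ i < k, ∀ l < ns i,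
      dist (φ (f^[(∑ j ∈ Finset.range i, (ns j + ms j)) + l] z)) (φ (f^[l] (xs i))) ≤ ε) :
    dist (birkhoffSum f φ (∑ j ∈ Finset.range k, (ns j + ms j)) z)
        (∑ j ∈ Finset.range k, birkhoffSum f φ (ns j) (xs j))
      ≤ ∑ j ∈ Finset.range k, (ns j * ε + ms j * B) := by
  induction k with
  | zero => simp
  | succ k ih =>
    simp only [Finset.sum_range_succ _ k]
    set p := ∑ j ∈ Finset.range k, (ns j + ms j)
    have hblock : dist (birkhoffSum f φ (ns k) (f^[p] z)) (birkhoffSum f φ (ns k) (xs k))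
        ≤ ns k * ε :=
      dist_birkhoffSum_birkhoffSum_le_mul fun l hl => by
        simpa only [← iterate_add_apply, add_comm l] using hz k k.lt_succ_self l hl
    have hgap : dist (birkhoffSum f φ (ms k) (f^[ns k] (f^[p] z))) 0 ≤ ms k * B :=
      (dist_zero_right _).trans_le (norm_birkhoffSum_le hB _ _)
    rw [birkhoffSum_add, birkhoffSum_add, ← add_zero (birkhoffSum f φ (ns k) (xs k))]
    exact dist_add_add_le_of_le (ih fun i hi => hz i (hi.trans k.lt_succ_self))
      (dist_add_add_le_of_le hblock hgap)

theorem norm_birkhoffAverage_le_of_blocks [SeminormedAddCommGroup E] [NormedSpace ℝ E]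
    {B ε : ℝ} {k : ℕ} {xs : ℕ → α} {ns ms : ℕ → ℕ} {z : α} (hε : 0 ≤ ε) (hB : ∀ x, ‖φ x‖ ≤ B)
    (hms : ∀ i < k, ms i * B ≤ ns i * ε)
    (hxs : ‖∑ j ∈ Finset.range k, birkhoffSum f φ (ns j) (xs j)‖
      ≤ ∑ j ∈ Finset.range k, ns j * ε)
    (hz : ∀ i < k, ∀ l < ns i,
      dist (φ (f^[(∑ j ∈ Finset.range i, (ns j + ms j)) + l] z)) (φ (f^[l] (xs i))) ≤ ε) :
    ‖birkhoffAverage ℝ f φ (∑ j ∈ Finset.range k, (ns j + ms j)) z‖ ≤ 3 * ε := by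
  set p := ∑ j ∈ Finset.range k, (ns j + ms j)
  set S := ∑ j ∈ Finset.range k, birkhoffSum f φ (ns j) (xs j)
  have hsum : ‖birkhoffSum f φ p z‖ ≤ p * (3 * ε) :=
    calc ‖birkhoffSum f φ p z‖
      _ ≤ dist (birkhoffSum f φ p z) S + ‖S‖ := by
        simpa only [dist_eq_norm] using norm_le_norm_sub_add _ S
      _ ≤ ∑ j ∈ Finset.range k, (ns j * ε + ms j * B) + ∑ j ∈ Finset.range k, ns j * ε :=
        add_le_add (dist_birkhoffSum_sum_birkhoffSum_le hB hz) hxs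
      _ = ∑ j ∈ Finset.range k, (2 * (ns j * ε) + ms j * B) := by
        rw [← Finset.sum_add_distrib]
        exact Finset.sum_congr rfl fun j _ => by ring
      _ ≤ ∑ j ∈ Finset.range k, (ns j + ms j : ℕ) * (3 * ε) := by
        refine Finset.sum_le_sum fun j hj => ?_
        have hgap : 0 ≤ ms j * ε := by positivity
        push_cast
        linarith [hms j (Finset.mem_range.1 hj)]
      _ = p * (3 * ε) := by rw [← Finset.sum_mul, ← Nat.cast_sum]
  rw [birkhoffAverage, norm_smul, norm_inv, RCLike.norm_natCast]
  exact inv_mul_le_of_le_mul₀ p.cast_nonneg (by positivity) hsum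

variable [MeasurableSpace α] {μ : Measure α} [NormedAddCommGroup E]

theorem integrable_birkhoffSum (hf : MeasurePreserving f μ μ) (hφ : Integrable φ μ) (n : ℕ) :
    Integrable (birkhoffSum f φ n) μ :=
  integrable_finsetSum _ fun l _ => (hf.iterate l).integrable_comp_of_integrable hφ

theorem integral_birkhoffSum [NormedSpace ℝ E] (hf : MeasurePreserving f μ μ)
    (hφ : Integrable φ μ) (n : ℕ) :
    ∫ x, birkhoffSum f φ n x ∂μ = n • ∫ x, φ x ∂μ :=
  calc ∫ x, birkhoffSum f φ n x ∂μ
    _ = ∑ l ∈ Finset.range n, ∫ x, (φ ∘ f^[l]) x ∂μ :=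
        integral_finsetSum _ fun l _ => (hf.iterate l).integrable_comp_of_integrable hφ
    _ = ∑ _l ∈ Finset.range n, ∫ x, φ x ∂μ := Finset.sum_congr rfl fun l _ =>
        (hf.iterate l).hasLaw.integral_comp hφ.aestronglyMeasurable
    _ = n • ∫ x, φ x ∂μ := by rw [Finset.sum_const, Finset.card_range]

theorem exists_seq_forall_mem_eventually_norm_sum_birkhoffSum_le {ι : Type*} [Finite ι]
    [NormedSpace ℝ E] [CompleteSpace E] [IsProbabilityMeasure μ] {Λ : Set α} {φ : ι → α → E} {ε : ℝ}
    (hf : MeasurePreserving f μ μ) (hΛ : ∀ᵐ x ∂μ, x ∈ Λ) (hφ : ∀ i, Integrable (φ i) μ)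
    (hφ₀ : ∀ i, ∫ x, φ i x ∂μ = 0) (n : ℕ) (hε : 0 < ε) :
    ∃ xs : ℕ → α, (∀ j, xs j ∈ Λ) ∧ ∀ᶠ k : ℕ in atTop, ∀ i,
      ‖∑ j ∈ Finset.range k, birkhoffSum f (φ i) n (xs j)‖ ≤ k * ε := by
  obtain ⟨xs, hxs, hlim⟩ := exists_seq_forall_mem_forall_tendsto_average hΛ
    fun i => integrable_birkhoffSum hf (hφ i) n
  refine ⟨xs, hxs, eventually_all.2 fun i => ?_⟩
  have hlim₀ := (hlim i).norm
  rw [integral_birkhoffSum hf (hφ i), hφ₀ i, smul_zero, norm_zero] at hlim₀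
  filter_upwards [hlim₀.eventually_le_const hε, eventually_gt_atTop 0] with k hk hk₀
  rw [norm_smul, norm_inv, RCLike.norm_natCast] at hk
  exact (inv_mul_le_iff₀ (Nat.cast_pos.2 hk₀)).1 hk

end Birkhoff

section PeriodicMeasures

variable {α : Type*} [MeasurableSpace α] {f : α → α}

theorem InvMeas.measurePreserving {μ : ProbabilityMeasure α} (hμ : InvMeas f μ)
    (hf : Measurable f) : MeasurePreserving f (μ : Measure α) μ :=
  ⟨hf, Measure.ext fun A hA => (Measure.map_apply hf hA).trans (hμ A hA)⟩

theorem integral_empP [MeasurableSingletonClass α] {E : Type*} [NormedAddCommGroup E]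
    [NormedSpace ℝ E] [CompleteSpace E] (f : α → α) (φ : α → E) (z : α) (m : ℕ) :
    ∫ x, φ x ∂(empP f z m : Measure α) = birkhoffAverage ℝ f φ (m + 1) z := by
  change ∫ x, φ x ∂(empMeas f z m) = _
  rw [empMeas, integral_smul_measure,
    integral_finsetSum_measure fun _ _ => integrable_dirac enorm_lt_top]
  simp [birkhoffAverage, birkhoffSum, integral_dirac, ENNReal.toReal_add]

theorem exists_mem_periodicMeasures_forall_integral_eq [MeasurableSingletonClass α] {p : ℕ}
    {z : α} (hp : 0 < p) (hz : IsPeriodicPt f p z) :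
    ∃ ν ∈ periodicMeasures f, ∀ φ : α → ℝ,
      ∫ x, φ x ∂(ν : Measure α) = birkhoffAverage ℝ f φ p z := by
  obtain ⟨m, rfl⟩ := Nat.exists_eq_add_one.2 hp
  exact ⟨empP f z m, ⟨z, m, hz, rfl⟩, fun φ => integral_empP f φ z m⟩

end PeriodicMeasures

theorem mem_closure_of_forall_finset_exists_dist_integral_le {Ω : Type*} [MeasurableSpace Ω]
    [TopologicalSpace Ω] [OpensMeasurableSpace Ω] {S : Set (ProbabilityMeasure Ω)}
    {μ : ProbabilityMeasure Ω}
    (h : ∀ (F : Finset (Ω →ᵇ ℝ)) (ε : ℝ), 0 < ε → ∃ ν ∈ S, ∀ φ ∈ F,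
      dist (∫ x, φ x ∂(ν : Measure Ω)) (∫ x, φ x ∂(μ : Measure Ω)) ≤ ε) :
    μ ∈ closure S := by
  -- Tolerance `1` is enough along the net of finite sets `F`: it gives tolerance `ε` for `φ` as
  -- soon as `F` contains `ε⁻¹ • φ`.
  choose ν hνS hν using fun F => h F 1 one_pos
  refine mem_closure_of_tendsto (b := atTop) ?_ (Eventually.of_forall hνS)
  refine ProbabilityMeasure.tendsto_iff_forall_integral_tendsto.2 fun φ => ?_
  refine Metric.nhds_basis_closedBall.tendsto_right_iff.2 fun ε hε => ?_
  filter_upwards [eventually_ge_atTop {ε⁻¹ • φ}] with F hF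
  have hscaled := hν F (ε⁻¹ • φ) (hF (Finset.mem_singleton_self _))
  simp only [BoundedContinuousFunction.coe_smul, integral_smul, dist_smul₀, norm_inv,
    Real.norm_of_nonneg hε.le] at hscaled
  simpa using (inv_mul_le_iff₀ hε).1 hscaled

section Gluing

variable {α ι : Type*} [MetricSpace α] [MeasurableSpace α] [OpensMeasurableSpace α] [Finite ι]
  {f : α → α} {Λ : Set α} {μ : ProbabilityMeasure α} {φ : ι → α →ᵇ ℝ} {ε : ℝ}

theorem exists_mem_periodicMeasures_forall_norm_integral_le (hglue : PeriodicGluing f Λ)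
    (hμ : MeasurePreserving f (μ : Measure α) μ) (hΛ : ∀ᵐ x ∂(μ : Measure α), x ∈ Λ)
    (hφ : ∀ i, UniformContinuous (φ i)) (hφ₀ : ∀ i, ∫ x, φ i x ∂(μ : Measure α) = 0)
    (hε : 0 < ε) :
    ∃ ν ∈ periodicMeasures f, ∀ i, ‖∫ x, φ i x ∂(ν : Measure α)‖ ≤ 3 * ε := by
  obtain ⟨δ, hδ, hφδ⟩ :=
    Metric.uniformEquicontinuous_iff.1 (uniformEquicontinuous_finite.2 hφ) ε hε
  obtain ⟨B, hB⟩ : ∃ B, ∀ i, ‖φ i‖ ≤ B := by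
    simpa [bddAbove_def] using (Set.finite_range fun i => ‖φ i‖).bddAbove
  have hφB : ∀ i x, ‖φ i x‖ ≤ B := fun i x => ((φ i).norm_coe_le_norm x).trans (hB i)
  obtain ⟨M, hM⟩ := hglue δ hδ
  obtain ⟨N, hN₀, hMN⟩ : ∃ N : ℕ, 0 < N ∧ M * B ≤ N * ε :=
    ((eventually_gt_atTop 0).and
      ((tendsto_natCast_atTop_atTop.atTop_mul_const hε).eventually_ge_atTop (M * B))).exists
  obtain ⟨xs, hxs, hsum⟩ := exists_seq_forall_mem_eventually_norm_sum_birkhoffSum_le hμ hΛ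
    (fun i => (φ i).integrable μ) hφ₀ N (by positivity : 0 < N * ε)
  obtain ⟨k, hk, hk₀⟩ := (hsum.and (eventually_gt_atTop 0)).exists
  obtain ⟨ms, hms, z, hz, hshadow⟩ := hM k hk₀ xs (fun _ => N) (fun i _ => hxs i) fun _ _ => hN₀
  obtain ⟨ν, hν, hνφ⟩ := exists_mem_periodicMeasures_forall_integral_eq
    (Finset.sum_pos (fun _ _ => by omega) (Finset.nonempty_range_iff.2 hk₀.ne')) hz
  refine ⟨ν, hν, fun i => hνφ (φ i) ▸ norm_birkhoffAverage_le_of_blocks hε.le (hφB i)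
    (fun j hj => ?_) (by simpa using hk i)
    fun j hj l hl => (hφδ _ _ (hshadow j hj l hl) i).le⟩
  have hB₀ : 0 ≤ B := (norm_nonneg _).trans (hB i)
  exact (mul_le_mul_of_nonneg_right (Nat.cast_le.2 (hms j hj)) hB₀).trans hMN

theorem exists_mem_periodicMeasures_forall_dist_integral_le (hglue : PeriodicGluing f Λ)
    (hμ : MeasurePreserving f (μ : Measure α) μ) (hΛ : ∀ᵐ x ∂(μ : Measure α), x ∈ Λ)
    (hφ : ∀ i, UniformContinuous (φ i)) (hε : 0 < ε) :
    ∃ ν ∈ periodicMeasures f, ∀ i,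
      dist (∫ x, φ i x ∂(ν : Measure α)) (∫ x, φ i x ∂(μ : Measure α)) ≤ ε := by
  let c : ι → ℝ := fun i => ∫ x, φ i x ∂(μ : Measure α)
  let ψ : ι → α →ᵇ ℝ := fun i => φ i - BoundedContinuousFunction.const α (c i)
  have hψ : ∀ (i) (ν : ProbabilityMeasure α),
      ∫ x, ψ i x ∂(ν : Measure α) = ∫ x, φ i x ∂(ν : Measure α) - c i := fun i ν => by
    simp [ψ, integral_sub ((φ i).integrable ν) (integrable_const (c i))]
  obtain ⟨ν, hν, hνψ⟩ := exists_mem_periodicMeasures_forall_norm_integral_le (φ := ψ) hglue hμ hΛ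
    (fun i => (hφ i).sub uniformContinuous_const) (fun i => (hψ i μ).trans (sub_self _))
    (div_pos hε three_pos)
  refine ⟨ν, hν, fun i => ?_⟩
  rw [dist_eq_norm, ← hψ]
  exact (hνψ i).trans_eq (mul_div_cancel₀ ε three_ne_zero)

end Gluing

theorem gluing_periodic_approximation_general {f : X → X} (hf : Measurable f) {Λ : Set X}
    (hglue : PeriodicGluing f Λ) {μ : ProbabilityMeasure X} (hμ : InvMeas f μ)
    (hΛ : ∀ᵐ x ∂(μ : Measure X), x ∈ Λ) : μ ∈ closure (periodicMeasures f) :=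
  mem_closure_of_forall_finset_exists_dist_integral_le fun F ε hε => by
    obtain ⟨ν, hν, hνφ⟩ := exists_mem_periodicMeasures_forall_dist_integral_le
      (φ := fun φ : F => (φ : X →ᵇ ℝ)) hglue (hμ.measurePreserving hf) hΛ
      (fun φ => CompactSpace.uniformContinuous_of_continuous φ.1.continuous) hε
    exact ⟨ν, hν, fun φ hφ => hνφ ⟨φ, hφ⟩⟩

/-- If `Λ` is compact, invariant and has the periodic gluing orbit property, then every
invariant probability measure supported on `Λ` is a weak* limit of periodic measures. -/
theorem gluing_periodic_approximation (f : X → X) (hf : Continuous f) (Λ : Set X)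
    (hΛc : IsCompact Λ) (hΛinv : f '' Λ ⊆ Λ) (hglue : PeriodicGluing f Λ) :
    ∀ μ : ProbabilityMeasure X, InvMeas f μ → μ.toMeasure Λ = 1 →
      μ ∈ closure (periodicMeasures f) := by
  intro μ hμ hμΛ
  exact gluing_periodic_approximation_general hf.measurable hglue hμ
    ((mem_ae_iff_prob_eq_one hΛc.measurableSet).2 hμΛ)
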